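/- Let χ : L → M be an injective morphism of differential graded Lie algebras over a field K of characteristic 0. Then the map TW(χ) → (M/χ(L))[−1] sending (l, p(t) m₀ + q(t) dt m₁) to (∫₀¹ q(t) dt) · m₁ modulo χ(L) is a surjective quasi-isomorphism of complexes from the homotopy fibre of χ to the shifted cokernel of χ. -/

import Mathlib

/-!
Basic homotopical algebra of differential graded Lie algebras over a field of
characteristic zero, following [Iacono, "Deformations and obstructions of pairs (X,D)"].

A differential graded Lie algebra (DGLA) is encoded as a `K`-module together with an
internal `ℤ`-grading (a family of submodules whose direct sum is the whole module),
a differential of degree `+1` squaring to zero, and a bracket which is graded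
skew-symmetric, satisfies the graded Jacobi identity and the graded Leibniz rule.
-/

universe u v w

/-- A `ℤ`-graded cochain complex structure on a `K`-module `V`: an internal grading
together with a differential of degree `+1` squaring to zero. -/
structure CochainStruct (K : Type u) [Field K] (V : Type v) [AddCommGroup V] [Module K V] :
    Type (max u v) where
  grading : ℤ → Submodule K V
  isInternal : DirectSum.IsInternal grading
  d : V →ₗ[K] V
  d_degree : ∀ i : ℤ, ∀ x ∈ grading i, d x ∈ grading (i + 1)
  d_sq : ∀ x : V, d (d x) = 0

namespace CochainStruct

variable {K : Type u} [Field K] {V : Type v} [AddCommGroup V] [Module K V]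
  {W : Type w} [AddCommGroup W] [Module K W]

/-- Degree `i` cocycles. -/
def cocycles (c : CochainStruct K V) (i : ℤ) : Submodule K V :=
  c.grading i ⊓ LinearMap.ker c.d

/-- Degree `i` coboundaries, as a submodule of the degree `i` cocycles. -/
def coboundaries (c : CochainStruct K V) (i : ℤ) : Submodule K (c.cocycles i) :=
  Submodule.comap (c.cocycles i).subtype (c.grading i ⊓ LinearMap.range c.d)

/-- The degree `i` cohomology of a graded cochain complex. -/
def cohomology (c : CochainStruct K V) (i : ℤ) : Type v :=
  c.cocycles i ⧸ c.coboundaries i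

instance (c : CochainStruct K V) (i : ℤ) : AddCommGroup (c.cohomology i) :=
  inferInstanceAs (AddCommGroup (c.cocycles i ⧸ c.coboundaries i))

instance (c : CochainStruct K V) (i : ℤ) : Module K (c.cohomology i) :=
  inferInstanceAs (Module K (c.cocycles i ⧸ c.coboundaries i))

end CochainStruct

/-- A (degree zero) morphism of graded cochain complexes. -/
structure CochainMap {K : Type u} [Field K] {V : Type v} {W : Type w}
    [AddCommGroup V] [Module K V] [AddCommGroup W] [Module K W]
    (c : CochainStruct K V) (c' : CochainStruct K W) : Type (max u v w) where
  toFun : V →ₗ[K] W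
  map_grading : ∀ i : ℤ, ∀ x ∈ c.grading i, toFun x ∈ c'.grading i
  map_d : ∀ x : V, toFun (c.d x) = c'.d (toFun x)

namespace CochainMap

variable {K : Type u} [Field K] {V : Type v} {W : Type w}
  [AddCommGroup V] [Module K V] [AddCommGroup W] [Module K W]
  {c : CochainStruct K V} {c' : CochainStruct K W}

/-- The induced map on cocycles. -/
def cocyclesMap (f : CochainMap c c') (i : ℤ) : c.cocycles i →ₗ[K] c'.cocycles i :=
  f.toFun.restrict (p := c.cocycles i) (q := c'.cocycles i) fun x hx => by
    rcases Submodule.mem_inf.mp hx with ⟨h1, h2⟩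
    refine Submodule.mem_inf.mpr ⟨f.map_grading i x h1, ?_⟩
    simp only [LinearMap.mem_ker] at h2 ⊢
    rw [← f.map_d, h2, map_zero]

/-- The induced map in cohomology. -/
def cohMap (f : CochainMap c c') (i : ℤ) :
    c.cohomology i →ₗ[K] c'.cohomology i :=
  Submodule.mapQ (c.coboundaries i) (c'.coboundaries i) (f.cocyclesMap i) (by
    rintro ⟨x, hx⟩ hmem
    simp only [CochainStruct.coboundaries, Submodule.mem_comap] at hmem ⊢
    rcases Submodule.mem_inf.mp hmem with ⟨h1, h2⟩
    refine Submodule.mem_inf.mpr ⟨?_, ?_⟩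
    · exact f.map_grading i x h1
    · rcases h2 with ⟨y, hy⟩
      exact ⟨f.toFun y, by
        have := f.map_d y
        simp only [Submodule.coe_subtype] at hy ⊢
        rw [← this, hy]
        rfl⟩)

end CochainMap

/-- A differential graded Lie algebra structure on a `K`-module `L`:
a graded cochain complex together with a degree zero graded bracket which is
graded skew-symmetric and satisfies the graded Jacobi identity and the graded
Leibniz rule. -/
structure DGLAStruct (K : Type u) [Field K] (L : Type v) [AddCommGroup L] [Module K L]
    extends CochainStruct K L where
  bracket : L →ₗ[K] L →ₗ[K] L
  bracket_degree : ∀ i j : ℤ, ∀ x ∈ grading i, ∀ y ∈ grading j, bracket x y ∈ grading (i + j)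
  bracket_skew : ∀ i j : ℤ, ∀ x ∈ grading i, ∀ y ∈ grading j,
    bracket x y = -(((-1 : K) ^ (i * j)) • bracket y x)
  bracket_jacobi : ∀ i j : ℤ, ∀ x ∈ grading i, ∀ y ∈ grading j, ∀ z : L,
    bracket x (bracket y z) =
      bracket (bracket x y) z + ((-1 : K) ^ (i * j)) • bracket y (bracket x z)
  bracket_leibniz : ∀ i : ℤ, ∀ x ∈ grading i, ∀ y : L,
    d (bracket x y) = bracket (d x) y + ((-1 : K) ^ i) • bracket x (d y)

/-- A morphism of differential graded Lie algebras. -/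
structure DGLAStructHom {K : Type u} [Field K] {L : Type v} {M : Type w}
    [AddCommGroup L] [Module K L] [AddCommGroup M] [Module K M]
    (g : DGLAStruct K L) (h : DGLAStruct K M) : Type (max u v w) where
  toFun : L →ₗ[K] M
  map_grading : ∀ i : ℤ, ∀ x ∈ g.grading i, toFun x ∈ h.grading i
  map_d : ∀ x : L, toFun (g.d x) = h.d (toFun x)
  map_bracket : ∀ x y : L, toFun (g.bracket x y) = h.bracket (toFun x) (toFun y)

namespace DGLAStructHom

variable {K : Type u} [Field K] {L : Type v} {M : Type w}
  [AddCommGroup L] [Module K L] [AddCommGroup M] [Module K M]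
  {g : DGLAStruct K L} {h : DGLAStruct K M}

/-- The underlying morphism of complexes of a morphism of DGLAs. -/
def toCochainMap (f : DGLAStructHom g h) :
    CochainMap g.toCochainStruct h.toCochainStruct :=
  ⟨f.toFun, f.map_grading, f.map_d⟩

/-- A quasi-isomorphism of DGLAs is a morphism inducing bijections in cohomology. -/
def IsQuasiIso (f : DGLAStructHom g h) : Prop :=
  ∀ i : ℤ, Function.Bijective (f.toCochainMap.cohMap i)

end DGLAStructHom

/-- A bundled differential graded Lie algebra over `K`. -/
structure DGLA (K : Type u) [Field K] : Type (max u (v + 1)) where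
  carrier : Type v
  [acg : AddCommGroup carrier]
  [mod : Module K carrier]
  str : DGLAStruct K carrier

attribute [instance] DGLA.acg DGLA.mod

namespace DGLA

variable {K : Type u} [Field K]

/-- Two DGLAs are related if there is a quasi-isomorphism from the first to the second. -/
def qisRel : DGLA.{u, v} K → DGLA.{u, v} K → Prop := fun X Y =>
  ∃ f : DGLAStructHom X.str Y.str, f.IsQuasiIso

/-- Homotopy equivalence of DGLAs: the equivalence relation generated by
quasi-isomorphisms. -/
def HomotopyEquiv (X Y : DGLA.{u, v} K) : Prop :=
  Relation.EqvGen qisRel X Y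

/-- A DGLA is abelian if its bracket is trivial. -/
def IsAbelian (X : DGLA.{u, v} K) : Prop :=
  ∀ x y : X.carrier, X.str.bracket x y = 0

/-- A DGLA is homotopy abelian if it is homotopy equivalent (i.e. quasi-isomorphic,
under the equivalence relation generated by quasi-isomorphisms) to an abelian DGLA. -/
def HomotopyAbelian (X : DGLA.{u, v} K) : Prop :=
  ∃ Y : DGLA.{u, v} K, Y.IsAbelian ∧ X.HomotopyEquiv Y

end DGLA

/-- A zig-zag of morphisms of DGLAs (the backwards arrows being quasi-isomorphisms):
a morphism in the homotopy category of DGLAs, i.e. an `L∞` morphism of DGLAs. -/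
inductive ZigZag {K : Type u} [Field K] : DGLA.{u, v} K → DGLA.{u, v} K → Type (max u (v + 1))
  | refl (X : DGLA.{u, v} K) : ZigZag X X
  | fwd {X Y Z : DGLA.{u, v} K} (f : DGLAStructHom X.str Y.str) (t : ZigZag Y Z) : ZigZag X Z
  | bwd {X Y Z : DGLA.{u, v} K} (f : DGLAStructHom Y.str X.str) (hf : f.IsQuasiIso)
      (t : ZigZag Y Z) : ZigZag X Z

/-- The map induced in cohomology by a zig-zag of morphisms of DGLAs. -/
noncomputable def ZigZag.cohMap {K : Type u} [Field K] :
    ∀ {X Y : DGLA.{u, v} K}, ZigZag X Y → ∀ i : ℤ,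
      X.str.toCochainStruct.cohomology i →ₗ[K] Y.str.toCochainStruct.cohomology i
  | _, _, .refl _, _ => LinearMap.id
  | _, _, .fwd f t, i => (t.cohMap i).comp (f.toCochainMap.cohMap i)
  | _, _, .bwd f hf t, i =>
      (t.cohMap i).comp
        ((LinearEquiv.ofBijective (f.toCochainMap.cohMap i) (hf i)).symm.toLinearMap)

/-!
The differential graded vector space `M[t,dt] = M ⊗ K[t,dt]` of polynomial differential
forms on the affine line with coefficients in a DGLA `M`, homotopy fibres, and Cartan
homotopies.  An element of `M[t,dt]` is written `p(t) + q(t) dt` and encoded as the pair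
of coefficient families `(p, q) : (ℕ →₀ M) × (ℕ →₀ M)`.
-/

/-- `M[t,dt]`: polynomial forms on the affine line with coefficients in `M`,
encoded as pairs `(p, q)` with `p(t) + q(t) dt`. -/
abbrev PolyDt (K : Type u) [Field K] (M : Type v) [AddCommGroup M] [Module K M] : Type v :=
  (ℕ →₀ M) × (ℕ →₀ M)

section PolyDt

variable {K : Type u} [Field K] {M : Type v} [AddCommGroup M] [Module K M]

/-- Evaluation at `t = 0`, `dt = 0`. -/
noncomputable def evAt0 : PolyDt K M →ₗ[K] M :=
  (Finsupp.lapply 0).comp (LinearMap.fst K (ℕ →₀ M) (ℕ →₀ M))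

/-- Evaluation at `t = 1`, `dt = 0`. -/
noncomputable def evAt1 : PolyDt K M →ₗ[K] M :=
  ((Finsupp.lsum K fun _ : ℕ => (LinearMap.id : M →ₗ[K] M)) :
      (ℕ →₀ M) →ₗ[K] M).comp (LinearMap.fst K (ℕ →₀ M) (ℕ →₀ M))

/-- The element `t^n m` of `M[t,dt]`. -/
noncomputable def inlP (n : ℕ) (m : M) : PolyDt K M := (Finsupp.single n m, 0)

/-- The element `t^n dt m` of `M[t,dt]`. -/
noncomputable def inrP (n : ℕ) (m : M) : PolyDt K M := (0, Finsupp.single n m)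

/-- The degree `j` part of `M[t,dt]` (with `t` of degree `0` and `dt` of degree `1`). -/
def polyGrading (h : DGLAStruct K M) (j : ℤ) : Submodule K (PolyDt K M) where
  carrier := {x | (∀ n : ℕ, x.1 n ∈ h.grading j) ∧ ∀ n : ℕ, x.2 n ∈ h.grading (j - 1)}
  zero_mem' := ⟨fun n => by simp, fun n => by simp⟩
  add_mem' := by
    rintro x y ⟨hx1, hx2⟩ ⟨hy1, hy2⟩
    refine ⟨fun n => ?_, fun n => ?_⟩
    · have : (x + y).1 n = x.1 n + y.1 n := by simp
      rw [this]; exact (h.grading j).add_mem (hx1 n) (hy1 n)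
    · have : (x + y).2 n = x.2 n + y.2 n := by simp
      rw [this]; exact (h.grading (j - 1)).add_mem (hx2 n) (hy2 n)
  smul_mem' := by
    rintro c x ⟨hx1, hx2⟩
    refine ⟨fun n => ?_, fun n => ?_⟩
    · have : (c • x).1 n = c • x.1 n := by simp
      rw [this]; exact (h.grading j).smul_mem c (hx1 n)
    · have : (c • x).2 n = c • x.2 n := by simp
      rw [this]; exact (h.grading (j - 1)).smul_mem c (hx2 n)

/-- The property that a DGLA structure `mt` on `M[t,dt]` is *the* DGLA of polynomial
forms on the affine line with coefficients in `(M, h)`: it is characterised by its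
grading and by its differential and bracket on the elements `t^n m` and `t^n dt m`. -/
structure IsPolyFormsDGLA (h : DGLAStruct K M) (mt : DGLAStruct K (PolyDt K M)) : Prop where
  grading_eq : ∀ j : ℤ, mt.grading j = polyGrading h j
  d_inl : ∀ (n : ℕ) (m : M), mt.d (inlP n m) = inlP n (h.d m) + inrP (n - 1) (n • m)
  d_inr : ∀ (n : ℕ) (m : M), mt.d (inrP n m) = -inrP n (h.d m)
  bracket_ll : ∀ (n n' : ℕ) (m m' : M),
    mt.bracket (inlP n m) (inlP n' m') = inlP (n + n') (h.bracket m m')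
  bracket_lr : ∀ i : ℤ, ∀ m ∈ h.grading i, ∀ (n n' : ℕ) (m' : M),
    mt.bracket (inlP n m) (inrP n' m') = ((-1 : K) ^ i) • inrP (n + n') (h.bracket m m')
  bracket_rl : ∀ (n n' : ℕ) (m m' : M),
    mt.bracket (inrP n m) (inlP n' m') = inrP (n + n') (h.bracket m m')
  bracket_rr : ∀ (n n' : ℕ) (m m' : M),
    mt.bracket (inrP n m) (inrP n' m') = 0

end PolyDt

section Fibre

variable {K : Type u} [Field K] {L : Type v} {M : Type v}
  [AddCommGroup L] [Module K L] [AddCommGroup M] [Module K M]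

/-- The underlying module of the homotopy fibre
`TW(χ) = { (l, m(t,dt)) ∈ L × M[t,dt] | m(0,0) = 0, m(1,0) = χ(l) }`
of a morphism of DGLAs `χ : L → M`. -/
noncomputable def fibreSub {g : DGLAStruct K L} {h : DGLAStruct K M}
    (χ : DGLAStructHom g h) : Submodule K (L × PolyDt K M) :=
  LinearMap.ker
    ((evAt0.comp (LinearMap.snd K L (PolyDt K M))).prod
      ((evAt1.comp (LinearMap.snd K L (PolyDt K M))) -
        χ.toFun.comp (LinearMap.fst K L (PolyDt K M))))

/-- The property that a DGLA structure `tw` on the module underlying the homotopy fibre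
of `χ : L → M` is *the* homotopy fibre DGLA: differential, bracket and grading are
computed componentwise from `L` and `M[t,dt]`. -/
structure IsHomotopyFibre {g : DGLAStruct K L} {h : DGLAStruct K M}
    (χ : DGLAStructHom g h) (mt : DGLAStruct K (PolyDt K M))
    (tw : DGLAStruct K ↥(fibreSub χ)) : Prop where
  grading_eq : ∀ i : ℤ, tw.grading i =
    Submodule.comap (fibreSub χ).subtype ((g.grading i).prod (mt.grading i))
  d_eq : ∀ v : fibreSub χ, (tw.d v : L × PolyDt K M) =
    (g.d (v : L × PolyDt K M).1, mt.d (v : L × PolyDt K M).2)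
  bracket_eq : ∀ v w : fibreSub χ, (tw.bracket v w : L × PolyDt K M) =
    (g.bracket (v : L × PolyDt K M).1 (w : L × PolyDt K M).1,
      mt.bracket (v : L × PolyDt K M).2 (w : L × PolyDt K M).2)

end Fibre

/-- A Cartan homotopy between differential graded Lie algebras: a degree `-1` linear
map `i : L → M` such that `i_{[a,b]} = [i_a, d_M i_b]` and `[i_a, i_b] = 0`. -/
structure CartanHomotopy {K : Type u} [Field K] {L : Type v} {M : Type w}
    [AddCommGroup L] [Module K L] [AddCommGroup M] [Module K M]
    (g : DGLAStruct K L) (h : DGLAStruct K M) : Type (max u v w) where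
  toFun : L →ₗ[K] M
  map_grading : ∀ i : ℤ, ∀ x ∈ g.grading i, toFun x ∈ h.grading (i - 1)
  cartan_bracket : ∀ a b : L, toFun (g.bracket a b) = h.bracket (toFun a) (h.d (toFun b))
  cartan_square : ∀ a b : L, h.bracket (toFun a) (toFun b) = 0

/-!
The map `TW(χ) → coker χ [-1]` is onto, so it suffices that its kernel is acyclic. If
`(l, p + q dt)` is a cocycle, then `dl = 0`, `dp = 0` and `p' = dq`. If moreover `∫₀¹ q = χ l'`,
put `P(t) = ∫₀ᵗ q`: then `P(0) = 0` and `P(1) = χ l'`, so `(l', P)` lies in `TW(χ)`, and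
`d(l', P) = (dl', dP + q dt)`. Here `dP = ∫₀ᵗ dq = ∫₀ᵗ p' = p`, and evaluating at `t = 1` gives
`χ(dl') = χ l`, whence `dl' = l` because `χ` is injective. Homogeneity
needs no bookkeeping: if an arbitrary cocycle maps to an element of degree `i`, then its component
of degree `i` is a cocycle with the same image.
-/

theorem coe_decompose_map_of_injective {ι κ R V W : Type*} [DecidableEq ι] [DecidableEq κ]
    [Semiring R] [AddCommMonoid V] [Module R V] [AddCommMonoid W] [Module R W]
    (ℳ : ι → Submodule R V) (𝒩 : κ → Submodule R W)
    [DirectSum.Decomposition ℳ] [DirectSum.Decomposition 𝒩]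
    {σ : ι → κ} (hσ : Function.Injective σ) (T : V →ₗ[R] W)
    (hT : ∀ i, ∀ x ∈ ℳ i, T x ∈ 𝒩 (σ i)) (x : V) (i : ι) :
    (DirectSum.decompose 𝒩 (T x) (σ i) : W) = T (DirectSum.decompose ℳ x i) := by
  induction x using DirectSum.Decomposition.inductionOn ℳ with
  | zero => simp
  | @homogeneous j m =>
    obtain rfl | hji := eq_or_ne j i
    · rw [DirectSum.decompose_of_mem_same _ (hT j m m.2), DirectSum.decompose_of_mem_same _ m.2]
    · rw [DirectSum.decompose_of_mem_ne _ (hT j m m.2) (hσ.ne hji),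
        DirectSum.decompose_of_mem_ne _ m.2 hji, map_zero]
  | add a b ha hb => simp [DirectSum.decompose_add, ha, hb]

namespace CochainMap

variable {K : Type u} [Field K] {V : Type v} {W : Type w}
  [AddCommGroup V] [Module K V] [AddCommGroup W] [Module K W]
  {c : CochainStruct K V} {c' : CochainStruct K W} (f : CochainMap c c')

theorem exists_mem_cocycles_map_eq {i : ℤ} {x : V} (hx : c.d x = 0)
    (hfx : f.toFun x ∈ c'.grading i) : ∃ z ∈ c.cocycles i, f.toFun z = f.toFun x := by
  classical
  let := c.isInternal.chooseDecomposition
  let := c'.isInternal.chooseDecomposition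
  refine ⟨DirectSum.decompose c.grading x i, ⟨SetLike.coe_mem _, LinearMap.mem_ker.2 ?_⟩, ?_⟩
  · rw [← coe_decompose_map_of_injective _ c.grading (add_left_injective (1 : ℤ)) c.d c.d_degree,
      hx]
    simp
  · rw [← coe_decompose_map_of_injective _ c'.grading Function.injective_id f.toFun f.map_grading]
    exact DirectSum.decompose_of_mem_same _ hfx

variable {f}

theorem cohMap_injective_of_surjective_of_acyclic_ker (hf : Function.Surjective f.toFun)
    (hker : ∀ x, f.toFun x = 0 → c.d x = 0 → ∃ y, f.toFun y = 0 ∧ c.d y = x) (i : ℤ) :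
    Function.Injective (f.cohMap i) := by
  rw [injective_iff_map_eq_zero]
  intro a ha
  obtain ⟨⟨x, hxi, hdx⟩, rfl⟩ := Submodule.mkQ_surjective _ a
  obtain ⟨-, w, hw : c'.d w = f.toFun x⟩ := (Submodule.Quotient.mk_eq_zero _).1 ha
  obtain ⟨y, rfl⟩ := hf w
  have hfxy : f.toFun (x - c.d y) = 0 := by rw [map_sub, f.map_d, hw, sub_self]
  have hdxy : c.d (x - c.d y) = 0 := by rw [map_sub, LinearMap.mem_ker.1 hdx, c.d_sq, sub_zero]
  obtain ⟨z, -, hz⟩ := hker _ hfxy hdxy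
  have hxyz : c.d (y + z) = x := by rw [map_add, hz, add_sub_cancel]
  exact (Submodule.Quotient.mk_eq_zero _).2 ⟨hxi, y + z, hxyz⟩

theorem cohMap_surjective_of_surjective_of_acyclic_ker (hf : Function.Surjective f.toFun)
    (hker : ∀ x, f.toFun x = 0 → c.d x = 0 → ∃ y, f.toFun y = 0 ∧ c.d y = x) (i : ℤ) :
    Function.Surjective (f.cohMap i) := by
  intro b
  obtain ⟨⟨w, hwi, hdw⟩, rfl⟩ := Submodule.mkQ_surjective _ b
  obtain ⟨x, rfl⟩ := hf w
  have hfdx : f.toFun (c.d x) = 0 := by rw [f.map_d, LinearMap.mem_ker.1 hdw]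
  obtain ⟨y, hfy, hdy⟩ := hker _ hfdx (c.d_sq x)
  have hfxy : f.toFun (x - y) = f.toFun x := by rw [map_sub, hfy, sub_zero]
  have hdxy : c.d (x - y) = 0 := by rw [map_sub, hdy, sub_self]
  obtain ⟨z, hz, hfz⟩ := f.exists_mem_cocycles_map_eq hdxy (hfxy.symm ▸ hwi)
  exact ⟨Submodule.mkQ _ ⟨z, hz⟩, congrArg (Submodule.mkQ _) (Subtype.ext (hfz.trans hfxy))⟩

theorem cohMap_bijective_of_surjective_of_acyclic_ker (hf : Function.Surjective f.toFun)
    (hker : ∀ x, f.toFun x = 0 → c.d x = 0 → ∃ y, f.toFun y = 0 ∧ c.d y = x) (i : ℤ) :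
    Function.Bijective (f.cohMap i) :=
  ⟨cohMap_injective_of_surjective_of_acyclic_ker hf hker i,
    cohMap_surjective_of_surjective_of_acyclic_ker hf hker i⟩

end CochainMap

namespace PolyDt

variable (K : Type u) [Field K] {M : Type v} [AddCommGroup M] [Module K M]
  {N : Type w} [AddCommGroup N] [Module K N]

/-- The value `p(1)` of a polynomial `p(t)` with coefficients in `M`, encoded by its coefficient
family. -/
noncomputable def evalOne : (ℕ →₀ M) →ₗ[K] M :=
  Finsupp.lsum K fun _ => LinearMap.id

/-- The derivative `p'(t)` of a polynomial `p(t)` with coefficients in `M`. -/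
noncomputable def derivative : (ℕ →₀ M) →ₗ[K] ℕ →₀ M :=
  Finsupp.lsum K fun n => n • Finsupp.lsingle (n - 1)

/-- The primitive `∫₀ᵗ q(s) ds` of a polynomial `q(t)` with coefficients in `M`. The coefficients
`(n + 1)⁻¹` have their meaning only in characteristic zero. -/
noncomputable def primitive : (ℕ →₀ M) →ₗ[K] ℕ →₀ M :=
  Finsupp.lsum K fun n => ((n : K) + 1)⁻¹ • Finsupp.lsingle (n + 1)

/-- The integral `∫₀¹ q(t) dt` of a polynomial `q(t)` with coefficients in `M`. The coefficients
`(n + 1)⁻¹` have their meaning only in characteristic zero. -/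
noncomputable def integral : (ℕ →₀ M) →ₗ[K] M :=
  Finsupp.lsum K fun n => ((n : K) + 1)⁻¹ • LinearMap.id

@[simp]
theorem evalOne_single (n : ℕ) (m : M) : evalOne K (Finsupp.single n m) = m := by
  simp [evalOne]

@[simp]
theorem derivative_single (n : ℕ) (m : M) :
    derivative K (Finsupp.single n m) = Finsupp.single (n - 1) (n • m) := by
  simp [derivative]

@[simp]
theorem primitive_single (n : ℕ) (m : M) :
    primitive K (Finsupp.single n m) = Finsupp.single (n + 1) (((n : K) + 1)⁻¹ • m) := by
  simp [primitive]

@[simp]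
theorem integral_single (n : ℕ) (m : M) :
    integral K (Finsupp.single n m) = ((n : K) + 1)⁻¹ • m := by
  simp [integral]

theorem primitive_mapRange (f : M →ₗ[K] N) (q : ℕ →₀ M) :
    primitive K (Finsupp.mapRange.linearMap f q) =
      Finsupp.mapRange.linearMap f (primitive K q) := by
  induction q using Finsupp.induction_linear with
  | zero => simp
  | add p q hp hq => simp only [map_add, hp, hq]
  | single n m => simp

theorem integral_mapRange (f : M →ₗ[K] N) (q : ℕ →₀ M) :
    integral K (Finsupp.mapRange.linearMap f q) = f (integral K q) := by
  induction q using Finsupp.induction_linear with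
  | zero => simp
  | add p q hp hq => simp only [map_add, hp, hq]
  | single n m => simp

theorem primitive_apply_zero (q : ℕ →₀ M) : primitive K q 0 = 0 := by
  induction q using Finsupp.induction_linear with
  | zero => simp
  | add p q hp hq => simp only [map_add, Finsupp.add_apply, hp, hq, add_zero]
  | single n m => simp

theorem evalOne_primitive (q : ℕ →₀ M) : evalOne K (primitive K q) = integral K q := by
  induction q using Finsupp.induction_linear with
  | zero => simp
  | add p q hp hq => simp only [map_add, hp, hq]
  | single n m => simp

theorem derivative_primitive [CharZero K] (q : ℕ →₀ M) :
    derivative K (primitive K q) = q := by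
  induction q using Finsupp.induction_linear with
  | zero => simp
  | add p q hp hq => simp only [map_add, hp, hq]
  | single n m =>
    have hn : (n : K) + 1 ≠ 0 := n.cast_add_one_ne_zero
    simp [← Nat.cast_smul_eq_nsmul K, smul_smul, hn]

theorem primitive_derivative [CharZero K] (p : ℕ →₀ M) :
    primitive K (derivative K p) = p - Finsupp.single 0 (p 0) := by
  induction p using Finsupp.induction_linear with
  | zero => simp
  | add p q hp hq =>
    simp only [map_add, hp, hq, Finsupp.add_apply, Finsupp.single_add, add_sub_add_comm]
  | single n m =>
    cases n with
    | zero => simp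
    | succ n =>
      have hn : (n : K) + 1 ≠ 0 := n.cast_add_one_ne_zero
      simp [← Nat.cast_smul_eq_nsmul K, smul_smul, hn]

theorem integral_derivative [CharZero K] (p : ℕ →₀ M) :
    integral K (derivative K p) = evalOne K p - p 0 := by
  rw [← evalOne_primitive, primitive_derivative, map_sub, evalOne_single]

end PolyDt

section FibreToCokernel

open PolyDt

variable {K : Type u} [Field K] {L M : Type v} [AddCommGroup L] [Module K L]
  [AddCommGroup M] [Module K M] {g : DGLAStruct K L} {h : DGLAStruct K M}
  {χ : DGLAStructHom g h}

theorem IsPolyFormsDGLA.d_apply {mt : DGLAStruct K (PolyDt K M)}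
    (hmt : IsPolyFormsDGLA h mt) (x : PolyDt K M) :
    mt.d x = (Finsupp.mapRange.linearMap h.d x.1,
      derivative K x.1 - Finsupp.mapRange.linearMap h.d x.2) := by
  have hd : mt.d = (Finsupp.mapRange.linearMap h.d ∘ₗ LinearMap.fst K _ _).prod
      (derivative K ∘ₗ LinearMap.fst K _ _ -
        Finsupp.mapRange.linearMap h.d ∘ₗ LinearMap.snd K _ _) := by
    refine LinearMap.prod_ext (Finsupp.lhom_ext fun n m => ?_) (Finsupp.lhom_ext fun n m => ?_)
    · simpa [inlP, inrP] using hmt.d_inl n m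
    · simpa [inrP] using hmt.d_inr n m
  rw [hd]
  rfl

theorem mem_fibreSub_iff {v : L × PolyDt K M} :
    v ∈ fibreSub χ ↔ v.2.1 0 = 0 ∧ evalOne K v.2.1 = χ.toFun v.1 := by
  rw [← sub_eq_zero (a := evalOne K v.2.1), ← Prod.mk_eq_zero]
  rfl

variable {mt : DGLAStruct K (PolyDt K M)} {tw : DGLAStruct K (fibreSub χ)}
  {cq : CochainStruct K (M ⧸ LinearMap.range χ.toFun)}

theorem IsHomotopyFibre.coe_d_apply (htw : IsHomotopyFibre χ mt tw) (hmt : IsPolyFormsDGLA h mt)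
    (v : fibreSub χ) :
    (tw.d v : L × PolyDt K M) = (g.d v.1.1, Finsupp.mapRange.linearMap h.d v.1.2.1,
      derivative K v.1.2.1 - Finsupp.mapRange.linearMap h.d v.1.2.2) := by
  rw [htw.d_eq, hmt.d_apply]

/-- The property that a complex `cq` on `M/χ(L)` is the shifted cokernel `(M/χ(L))[-1]`: its degree
`i` part is the image of `M^{i-1}`, and the shift changes the sign of the differential. -/
structure IsShiftedCokernel (χ : DGLAStructHom g h)
    (cq : CochainStruct K (M ⧸ LinearMap.range χ.toFun)) : Prop where
  grading_eq : ∀ i : ℤ, cq.grading i =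
    Submodule.map (LinearMap.range χ.toFun).mkQ (h.grading (i - 1))
  d_mkQ : ∀ x : M, cq.d ((LinearMap.range χ.toFun).mkQ x) =
    -(LinearMap.range χ.toFun).mkQ (h.d x)

/-- The morphism of complexes `TW(χ) → (M/χ(L))[-1]`, `(l, p + q dt) ↦ ∫₀¹ q(t) dt mod χ(L)`. -/
noncomputable def fibreToCokernel [CharZero K] (hmt : IsPolyFormsDGLA h mt)
    (htw : IsHomotopyFibre χ mt tw) (hcq : IsShiftedCokernel χ cq) :
    CochainMap tw.toCochainStruct cq where
  toFun := (LinearMap.range χ.toFun).mkQ ∘ₗ integral K ∘ₗ LinearMap.snd K _ _ ∘ₗ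
    LinearMap.snd K _ _ ∘ₗ (fibreSub χ).subtype
  map_grading i v hv := by
    rw [htw.grading_eq, hmt.grading_eq] at hv
    obtain ⟨-, -, hq⟩ := hv
    rw [hcq.grading_eq]
    exact Submodule.mem_map_of_mem
      (Submodule.sum_mem _ fun n _ => Submodule.smul_mem _ _ (hq n))
  map_d v := by
    obtain ⟨hp0, hp1⟩ := mem_fibreSub_iff.1 v.2
    have hχl : (LinearMap.range χ.toFun).mkQ (χ.toFun v.1.1) = 0 :=
      (Submodule.Quotient.mk_eq_zero _).2 (LinearMap.mem_range_self _ _)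
    simp only [LinearMap.comp_apply, Submodule.subtype_apply, LinearMap.snd_apply,
      htw.coe_d_apply hmt, hcq.d_mkQ, map_sub, integral_derivative, integral_mapRange, hp0, hp1,
      sub_zero, hχl, zero_sub]

variable [CharZero K] (hmt : IsPolyFormsDGLA h mt) (htw : IsHomotopyFibre χ mt tw)
  (hcq : IsShiftedCokernel χ cq)

theorem fibreToCokernel_surjective :
    Function.Surjective (fibreToCokernel hmt htw hcq).toFun := by
  intro y
  obtain ⟨m, rfl⟩ := (LinearMap.range χ.toFun).mkQ_surjective y
  have hm : ((0, 0, Finsupp.single 0 m) : L × PolyDt K M) ∈ fibreSub χ :=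
    mem_fibreSub_iff.2 ⟨by simp, by simp⟩
  exact ⟨⟨_, hm⟩, by simp [fibreToCokernel]⟩

theorem acyclic_ker_fibreToCokernel (hχ : Function.Injective χ.toFun) (v : fibreSub χ)
    (hv : (fibreToCokernel hmt htw hcq).toFun v = 0) (hdv : tw.d v = 0) :
    ∃ w, (fibreToCokernel hmt htw hcq).toFun w = 0 ∧ tw.d w = v := by
  obtain ⟨⟨l, p, q⟩, hlpq⟩ := v
  obtain ⟨hp0 : p 0 = 0, hp1 : evalOne K p = χ.toFun l⟩ := mem_fibreSub_iff.1 hlpq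
  obtain ⟨l', hl' : χ.toFun l' = integral K q⟩ := (Submodule.Quotient.mk_eq_zero _).1 hv
  have hpq : derivative K p = Finsupp.mapRange.linearMap h.d q := by
    have hcoe := htw.coe_d_apply hmt ⟨(l, p, q), hlpq⟩
    rw [hdv] at hcoe
    exact sub_eq_zero.1 (congrArg (fun x => x.2.2) hcoe).symm
  have hdP : Finsupp.mapRange.linearMap h.d (primitive K q) = p := by
    rw [← primitive_mapRange, ← hpq, primitive_derivative, hp0, Finsupp.single_zero, sub_zero]
  have hdl' : g.d l' = l := hχ <| calc
    χ.toFun (g.d l') = h.d (integral K q) := by rw [χ.map_d, hl']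
    _ = integral K (derivative K p) := by rw [hpq, integral_mapRange]
    _ = χ.toFun l := by rw [integral_derivative, hp0, hp1, sub_zero]
  have hw : ((l', primitive K q, 0) : L × PolyDt K M) ∈ fibreSub χ :=
    mem_fibreSub_iff.2 ⟨primitive_apply_zero K q, (evalOne_primitive K q).trans hl'.symm⟩
  refine ⟨⟨_, hw⟩, by simp [fibreToCokernel], Subtype.ext ?_⟩
  rw [htw.coe_d_apply hmt]
  simp only [hdl', hdP, derivative_primitive, map_zero, sub_zero]

end FibreToCokernel

/-- Let `χ : L → M` be an injective morphism of differential graded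
Lie algebras over a field `K` of characteristic `0`.  Then the map
`TW(χ) → (M/χ(L))[−1]`, `(l, p(t) m₀ + q(t) dt m₁) ↦ (∫₀¹ q(t) dt) · m₁ mod χ(L)`,
is a surjective quasi-isomorphism of complexes from the homotopy fibre of `χ` to the
shifted cokernel of `χ`.  Here `cq` is the shifted cokernel complex: its degree `i`
piece is the image of `M^{i-1}` and its differential is `-d̄`, and the integral of
`q(t) dt = Σ q_n t^n dt` is `Σ q_n/(n+1)`. -/
theorem homotopy_fibre_to_cokernel_qis {K : Type u} [Field K] [CharZero K]
    {L M : Type u} [AddCommGroup L] [Module K L] [AddCommGroup M] [Module K M]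
    {g : DGLAStruct K L} {h : DGLAStruct K M} (χ : DGLAStructHom g h)
    (hχ : Function.Injective χ.toFun)
    (mt : DGLAStruct K (PolyDt K M)) (hmt : IsPolyFormsDGLA h mt)
    (tw : DGLAStruct K ↥(fibreSub χ)) (htw : IsHomotopyFibre χ mt tw)
    (cq : CochainStruct K (M ⧸ LinearMap.range χ.toFun))
    (hcq_grading : ∀ i : ℤ, cq.grading i =
      Submodule.map (LinearMap.range χ.toFun).mkQ (h.grading (i - 1)))
    (hcq_d : ∀ x : M, cq.d ((LinearMap.range χ.toFun).mkQ x) =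
      -(LinearMap.range χ.toFun).mkQ (h.d x)) :
    ∃ F : CochainMap tw.toCochainStruct cq,
      (∀ v : fibreSub χ,
        F.toFun v = (LinearMap.range χ.toFun).mkQ
          ((v : L × PolyDt K M).2.2.sum fun n m => (((n : K) + 1)⁻¹) • m)) ∧
      Function.Surjective F.toFun ∧
      ∀ i : ℤ, Function.Bijective (F.cohMap i) := by
  have hcq : IsShiftedCokernel χ cq := ⟨hcq_grading, hcq_d⟩
  have hsurj := fibreToCokernel_surjective hmt htw hcq
  exact ⟨fibreToCokernel hmt htw hcq, fun _ => rfl, hsurj,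
    CochainMap.cohMap_bijective_of_surjective_of_acyclic_ker hsurj
      (acyclic_ker_fibreToCokernel hmt htw hcq hχ)⟩
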